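/- arXiv:1503.04834 — 3 statements merged into one kernel-verified Lean document; each statement's English description precedes it below -/
import Mathlib

section
/- Let d ≥ 1 be odd. Then there is no invertible element η of Cl (no η with IsUnit η) such that η · γₙ = −(γₙ · η) for all n with 1 ≤ n ≤ d; that is, the main involution γₙ ↦ −γₙ is not implemented by conjugation with any unit for odd d. -/
/-!
Let `ω = γ₁ ⋯ γ_d`. Moving `γⱼ` past `ω` produces one sign for each of the `d - 1` factors other
than `γⱼ`, so for odd `d` the element `ω` commutes with all generators and hence is central
(`commute_volume`). If `η γₙ = -γₙ η` for all `n`, then `η ω = (-1)^d ω η = -ω η`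
(`mul_prod_of_anticommute`); centrality turns this into `2 ω η = 0`. As `ω` and `η` are units
and `Cl` is a nontrivial real algebra, this is impossible.
-/

/-- An element anticommuting with every factor passes a product at the cost of one sign for each
factor. -/
lemma mul_prod_of_anticommute {A ι : Type*} [Ring A] (f : ι → A) (η : A)
    (h : ∀ i, η * f i = -(f i * η)) (l : List ι) :
    η * (l.map f).prod = (-1) ^ l.length * ((l.map f).prod * η) := by
  induction l with
  | nil => simp
  | cons i l ih =>
    rw [List.map_cons, List.prod_cons, ← mul_assoc, h, neg_mul, mul_assoc, ih,
      List.length_cons, pow_succ]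
    rcases neg_one_pow_eq_or A l.length with e | e <;> simp [e, mul_assoc]

/-- Among pairwise anticommuting elements, `f j` picks up one sign for each factor of a product
other than `f j` itself; the exponent counts the factors equal to `f j` twice. -/
lemma gen_mul_prod {A ι : Type*} [DecidableEq ι] [Ring A] (f : ι → A)
    (h : ∀ i j, i ≠ j → f i * f j = -(f j * f i)) (j : ι) (l : List ι) :
    f j * (l.map f).prod = (-1) ^ (l.length + l.count j) * ((l.map f).prod * f j) := by
  induction l with
  | nil => simp
  | cons i l ih =>
    rw [List.map_cons, List.prod_cons, List.length_cons]
    by_cases hij : i = j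
    · subst hij
      rw [List.count_cons_self, mul_assoc, ih,
        show l.length + 1 + (l.count i + 1) = l.length + l.count i + 2 by ring, pow_add _ _ 2,
        neg_one_sq, mul_one]
      rcases neg_one_pow_eq_or A (l.length + l.count i) with e | e <;> simp [e, mul_assoc]
    · rw [List.count_cons_of_ne hij, ← mul_assoc, h j i (Ne.symm hij), neg_mul, mul_assoc, ih,
        show l.length + 1 + l.count j = l.length + l.count j + 1 by ring, pow_succ]
      rcases neg_one_pow_eq_or A (l.length + l.count j) with e | e <;> simp [e, mul_assoc]

/-- In odd dimension the product of an anticommuting basis of generators is central. -/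
lemma commute_volume {d : ℕ} (hodd : Odd d) (Q : QuadraticForm ℝ (Fin d → ℝ))
    (h : ∀ i j : Fin d, i ≠ j →
      CliffordAlgebra.ι Q (Pi.single i 1) * CliffordAlgebra.ι Q (Pi.single j 1) =
        -(CliffordAlgebra.ι Q (Pi.single j 1) * CliffordAlgebra.ι Q (Pi.single i 1)))
    (x : CliffordAlgebra Q) :
    Commute x ((List.finRange d).map fun i => CliffordAlgebra.ι Q (Pi.single i 1)).prod := by
  set ω := ((List.finRange d).map fun i => CliffordAlgebra.ι Q (Pi.single i 1)).prod with hω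
  induction x using CliffordAlgebra.induction with
  | algebraMap r => exact Algebra.commutes r ω
  | add a b ha hb => exact ha.add_left hb
  | mul a b ha hb => exact ha.mul_left hb
  | ι v =>
    have key (j : Fin d) : Commute (CliffordAlgebra.ι Q (Pi.single j 1)) ω := by
      have := gen_mul_prod (fun i => CliffordAlgebra.ι Q (Pi.single i 1)) h j (List.finRange d)
      rw [List.length_finRange, List.count_eq_one_of_mem (List.nodup_finRange d)
        (List.mem_finRange j), hodd.add_one.neg_one_pow, one_mul] at this
      exact this
    rw [pi_eq_sum_univ' v, map_sum]
    refine Commute.sum_left _ _ _ fun j _ => ?_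
    rw [map_smul]
    exact (key j).smul_left _

/-- for odd `d`, the main involution `γₙ ↦ −γₙ` of the Clifford algebra of
the Euclidean quadratic form on `ℝ^d` is not implemented by conjugation with any unit. -/
theorem clifford_main_involution_not_inner_of_odd
    (d : ℕ) (hd : 1 ≤ d) (hodd : Odd d)
    (Q : QuadraticForm ℝ (Fin d → ℝ)) (hQ : ∀ x, Q x = ∑ i, x i ^ 2)
    (γ : ℕ → CliffordAlgebra Q)
    (hγ : ∀ n : Fin d, γ ((n : ℕ) + 1) = CliffordAlgebra.ι Q (Pi.single n 1)) :
    ¬ ∃ η : CliffordAlgebra Q, IsUnit η ∧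
      ∀ n, 1 ≤ n → n ≤ d → η * γ n = -(γ n * η) := by
  rintro ⟨η, hη, hanti⟩
  have hsq (i : Fin d) :
      CliffordAlgebra.ι Q (Pi.single i 1) * CliffordAlgebra.ι Q (Pi.single i 1) = 1 := by
    rw [CliffordAlgebra.ι_sq_scalar, hQ]
    simp [Pi.single_apply]
  have hac (i j : Fin d) (hij : i ≠ j) :
      CliffordAlgebra.ι Q (Pi.single i 1) * CliffordAlgebra.ι Q (Pi.single j 1) =
        -(CliffordAlgebra.ι Q (Pi.single j 1) * CliffordAlgebra.ι Q (Pi.single i 1)) := by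
    apply CliffordAlgebra.ι_mul_ι_comm_of_isOrtho
    rw [QuadraticMap.isOrtho_def, hQ, hQ, hQ, ← Finset.sum_add_distrib]
    refine Finset.sum_congr rfl fun k _ => ?_
    by_cases hi : k = i
    · subst hi
      simp [hij]
    · simp [Pi.single_apply, hi]
  have hc := commute_volume hodd Q hac η
  have hneg := mul_prod_of_anticommute (fun i : Fin d => CliffordAlgebra.ι Q (Pi.single i 1)) η
    (fun i => by rw [← hγ i]; exact hanti _ (by omega) (by omega)) (List.finRange d)
  have hu : IsUnit ((List.finRange d).map fun i => CliffordAlgebra.ι Q (Pi.single i 1)).prod := by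
    refine List.prod_isUnit fun m hm => ?_
    obtain ⟨i, -, rfl⟩ := List.mem_map.1 hm
    exact ⟨⟨_, _, hsq i, hsq i⟩, rfl⟩
  rw [List.length_finRange, hodd.neg_one_pow, neg_one_mul, ← hc.eq] at hneg
  have : IsAddTorsionFree (CliffordAlgebra Q) := .of_module_rat _
  exact (hη.mul hu).ne_zero (self_eq_neg.1 hneg)
end

section
/- Let n ≥ 1 and let Ω and Σ be complex matrices of size 2n (indexed by Fin n ⊕ Fin n) which are entrywise real and unitary, and which satisfy Ω·Ω = 1, trace Ω = 0, Σ·Σ = 1 and Ω·Σ = −Σ·Ω. Then there exists an entrywise real matrix O with Oᵀ·O = 1 such that Oᵀ·Ω·O = fromBlocks 1 0 0 (−1) and Oᵀ·Σ·O = fromBlocks 0 1 1 0, where all blocks have size n (i.e. Ω and Σ are simultaneously brought to the normal forms σ₃⊗1ₙ and σ₁⊗1ₙ by a real orthogonal basis change). -/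
/-!
Restrict to real scalars. Being orthogonal involutions, `Ω` and `Σ` are symmetric, so
`P = (1 + Ω) / 2` is idempotent; its trace is `n`, hence so is the dimension of its
range, the `+1` eigenspace of `Ω`. Let the columns of `W` be an orthonormal basis of that
eigenspace (`exists_orthonormal_frame`). As `Σ` anticommutes with `Ω`, it carries the `+1`
eigenspace isometrically into the `-1` eigenspace, which is orthogonal to it; hence `O = [W, Σ W]`
is orthogonal, `Ω` acts on its column blocks by `±1`, and `Σ = Σ⁻¹` swaps them.
-/

open Matrix

/-- The range of a real idempotent matrix of trace `k` has an orthonormal basis of `k` vectors,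
which form the columns of `W`. -/
lemma exists_orthonormal_frame {ι : Type*} [Fintype ι] [DecidableEq ι] (k : ℕ)
    (P : Matrix ι ι ℝ) (hP : P * P = P) (htr : P.trace = k) :
    ∃ W : Matrix ι (Fin k) ℝ, Wᵀ * W = 1 ∧ P * W = W := by
  let f := Matrix.toEuclideanLin P
  have hfP : ∀ x, f (f x) = f x := by
    intro x
    simp [f, Matrix.toLpLin_apply, Matrix.mulVec_mulVec, hP]
  have hf : IsIdempotentElem f := LinearMap.ext hfP
  have hft : LinearMap.trace ℝ _ f = P.trace := by
    rw [LinearMap.trace_eq_matrix_trace ℝ (EuclideanSpace.basisFun ι ℝ).toBasis,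
      show f = Matrix.toLin _ _ P from
        congrArg (fun g => g P) Matrix.toEuclideanLin_eq_toLin_orthonormal,
      LinearMap.toMatrix_toLin]
  have hrank : Module.finrank ℝ (LinearMap.range f) = k := by
    have h := (LinearMap.IsIdempotentElem.isProj_range f hf).trace
    rw [hft, htr] at h
    exact_mod_cast h.symm
  let b := (stdOrthonormalBasis ℝ (LinearMap.range f)).reindex (finCongr hrank)
  refine ⟨Matrix.of fun i j => (b j : EuclideanSpace ℝ ι) i, ?_, ?_⟩
  · ext i j
    have h := (orthonormal_iff_ite.mp b.orthonormal) i j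
    rw [Submodule.coe_inner, PiLp.inner_apply] at h
    simp only [Matrix.mul_apply, Matrix.transpose_apply, Matrix.of_apply, Matrix.one_apply]
    rw [← h]
    exact Finset.sum_congr rfl fun x _ => by simp [mul_comm]
  · ext i j
    obtain ⟨x, hx⟩ := (b j).2
    have h : f (b j) = b j := by rw [← hx, hfP]
    have h' := congrArg (fun v : EuclideanSpace ℝ ι => v i) h
    simpa [f, Matrix.toLpLin_apply, Matrix.mulVec, dotProduct, Matrix.mul_apply] using h'

/-- The normal form over `ℝ`, where unitarity of an involution amounts to symmetry. -/
lemma exists_real_orthogonal_normal_form (n : ℕ)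
    (A S : Matrix (Fin n ⊕ Fin n) (Fin n ⊕ Fin n) ℝ)
    (hA : Aᵀ = A) (hA2 : A * A = 1) (htr : A.trace = 0)
    (hS : Sᵀ = S) (hS2 : S * S = 1) (hanti : A * S = -(S * A)) :
    ∃ O : Matrix (Fin n ⊕ Fin n) (Fin n ⊕ Fin n) ℝ,
      Oᵀ * O = 1 ∧ Oᵀ * A * O = fromBlocks 1 0 0 (-1) ∧ Oᵀ * S * O = fromBlocks 0 1 1 0 := by
  obtain ⟨W, hW, hPW⟩ := exists_orthonormal_frame n ((1 / 2 : ℝ) • (1 + A))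
    (by
      rw [smul_mul_smul_comm, add_mul, mul_add, mul_add, hA2, one_mul, mul_one, one_mul]
      module)
    (by
      simp [Matrix.trace_add, htr]
      ring)
  have hAW : A * W = W := by
    rw [Matrix.smul_mul, Matrix.add_mul, Matrix.one_mul] at hPW
    have : A * W = (2 : ℝ) • ((1 / 2 : ℝ) • (W + A * W)) - W := by module
    rw [this, hPW]
    module
  have hWA : Wᵀ * A = Wᵀ := by
    simpa [hA] using congrArg Matrix.transpose hAW
  have hASW : A * (S * W) = -(S * W) := by
    rw [← Matrix.mul_assoc, hanti, Matrix.neg_mul, Matrix.mul_assoc, hAW]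
  have hSSW : S * (S * W) = W := by
    rw [← Matrix.mul_assoc, hS2, Matrix.one_mul]
  -- The two eigenspaces are orthogonal: moving `A` across `Wᵀ S W` changes its sign.
  have hWSW : Wᵀ * (S * W) = 0 := by
    have h : Wᵀ * (S * W) = -(Wᵀ * (S * W)) := by
      conv_lhs => rw [← hWA, Matrix.mul_assoc, hASW, Matrix.mul_neg]
    ext i j
    exact self_eq_neg.mp (congrFun (congrFun h i) j)
  have hT : (S * W)ᵀ = Wᵀ * S := by rw [Matrix.transpose_mul, hS]
  refine ⟨fromCols W (S * W), ?_, ?_, ?_⟩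
  · rw [transpose_fromCols, fromRows_mul_fromCols, hT, Matrix.mul_assoc, Matrix.mul_assoc, hSSW,
      hWSW, hW, fromBlocks_one]
  · rw [Matrix.mul_assoc, mul_fromCols, transpose_fromCols, fromRows_mul_fromCols, hT, hAW, hASW,
      Matrix.mul_neg, Matrix.mul_neg, Matrix.mul_assoc, Matrix.mul_assoc, hSSW, hWSW, hW, neg_zero]
  · rw [Matrix.mul_assoc, mul_fromCols, transpose_fromCols, fromRows_mul_fromCols, hT, hSSW,
      Matrix.mul_assoc, Matrix.mul_assoc, hSSW, hWSW, hW]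

lemma exists_map_ofReal_eq {ι : Type*} (M : Matrix ι ι ℂ) (hM : M.map (starRingEnd ℂ) = M) :
    ∃ R : Matrix ι ι ℝ, R.map Complex.ofRealHom = M := by
  refine ⟨M.map Complex.re, ?_⟩
  ext1 i j
  exact Complex.conj_eq_iff_re.mp (congrFun (congrFun hM i) j)

lemma transpose_eq_self_of_unitary_involution {ι : Type*} [Fintype ι] [DecidableEq ι]
    (R : Matrix ι ι ℝ)
    (hu : (R.map Complex.ofRealHom)ᴴ * R.map Complex.ofRealHom = 1)
    (h2 : R.map Complex.ofRealHom * R.map Complex.ofRealHom = 1) : Rᵀ = R := by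
  have h := left_inv_eq_right_inv hu h2
  ext i j
  have hij := congrFun (congrFun h i) j
  simpa using hij

/-- two entrywise real unitary matrices `Ω`, `Σ` of size `2n` with
`Ω² = 1`, `tr Ω = 0`, `Σ² = 1` and `ΩΣ = −ΣΩ` can be simultaneously brought to the
normal forms `σ₃⊗1ₙ` and `σ₁⊗1ₙ` by a real orthogonal basis change. -/
theorem real_symmetries_anticommuting_normal_form
    (n : ℕ) (hn : 1 ≤ n)
    (Om Sg : Matrix (Fin n ⊕ Fin n) (Fin n ⊕ Fin n) ℂ)
    (hOm_real : Om.map (starRingEnd ℂ) = Om)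
    (hOm_unit : Om.conjTranspose * Om = 1 ∧ Om * Om.conjTranspose = 1)
    (hOm2 : Om * Om = 1) (hOm_tr : Om.trace = 0)
    (hSg_real : Sg.map (starRingEnd ℂ) = Sg)
    (hSg_unit : Sg.conjTranspose * Sg = 1 ∧ Sg * Sg.conjTranspose = 1)
    (hSg2 : Sg * Sg = 1)
    (hanti : Om * Sg = -(Sg * Om)) :
    ∃ O : Matrix (Fin n ⊕ Fin n) (Fin n ⊕ Fin n) ℂ,
      O.map (starRingEnd ℂ) = O ∧ O.transpose * O = 1 ∧
      O.transpose * Om * O = Matrix.fromBlocks 1 0 0 (-1) ∧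
      O.transpose * Sg * O = Matrix.fromBlocks 0 1 1 0 := by
  obtain ⟨A, rfl⟩ := exists_map_ofReal_eq Om hOm_real
  obtain ⟨S, rfl⟩ := exists_map_ofReal_eq Sg hSg_real
  have inj : Function.Injective
      (fun M : Matrix (Fin n ⊕ Fin n) (Fin n ⊕ Fin n) ℝ => M.map Complex.ofRealHom) :=
    Matrix.map_injective Complex.ofRealHom.injective
  have hone : (1 : Matrix (Fin n ⊕ Fin n) (Fin n ⊕ Fin n) ℝ).map Complex.ofRealHom = 1 :=
    Matrix.map_one _ (map_zero _) (map_one _)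
  obtain ⟨O, hO, hOA, hOS⟩ := exists_real_orthogonal_normal_form n A S
    (transpose_eq_self_of_unitary_involution A hOm_unit.1 hOm2)
    (inj (by simp only [Matrix.map_mul, hone, hOm2]))
    (Complex.ofRealHom.injective (by
      rw [AddMonoidHom.map_trace, map_zero]; exact hOm_tr))
    (transpose_eq_self_of_unitary_involution S hSg_unit.1 hSg2)
    (inj (by simp only [Matrix.map_mul, hone, hSg2]))
    (inj (by
      simp only [Matrix.map_mul, hanti]
      ext i j
      simp [Matrix.mul_apply]))
  refine ⟨O.map Complex.ofRealHom, ?_, ?_, ?_, ?_⟩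
  · ext i j
    simp
  · rw [← Matrix.transpose_map, ← Matrix.map_mul, hO, hone]
  · rw [← Matrix.transpose_map, ← Matrix.map_mul, ← Matrix.map_mul, hOA, Matrix.fromBlocks_map]
    congr 1 <;> ext i j <;> simp [Matrix.one_apply, apply_ite]
  · rw [← Matrix.transpose_map, ← Matrix.map_mul, ← Matrix.map_mul, hOS, Matrix.fromBlocks_map]
    congr 1 <;> ext i j <;> simp [Matrix.one_apply, apply_ite]
end

section
/- Let m ≥ 1 and let Ω and Σ be complex matrices of size 4m (indexed by Fin (2m) ⊕ Fin (2m)) which are entrywise real and unitary, and which satisfy Ω·Ω = 1, trace Ω = 0, Σ·Σ = −1 and Ω·Σ = Σ·Ω. Then there exists an entrywise real matrix O with Oᵀ·O = 1 such that Oᵀ·Ω·O = fromBlocks 1 0 0 (−1) with blocks of size 2m, and Oᵀ·Σ·O = fromBlocks J 0 0 J, where J = fromBlocks 0 (−1) 1 0 is the standard symplectic matrix of size 2m (blocks of size m); i.e. Ω and Σ are simultaneously brought to the normal forms σ₃⊗1₂ₘ and 1₂⊗(iσ₂⊗1ₘ) by a real orthogonal basis change. -/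
/-!
For real `A` and `S` playing the roles of `Ω` and `Σ`, unitarity together with `A² = 1`, `S² = -1`
gives `Aᵀ = A` and `Sᵀ = -S`. The eigenspaces of `A` for `1` and `-1` are orthogonal to each other,
are `S`-invariant because `A` and `S` commute, and both have dimension `2m` because `tr A = 0`
(`exists_eigenframe` computes this as the trace of the projection `(1 ± A)/2`). In each of them a
greedy choice (`exists_isotropic_family`) produces orthonormal vectors `v₁, …, vₘ` with
`vᵢ ⬝ S vⱼ = 0`: as long as `2k` is less than the dimension there is a unit vector orthogonal to
all `vᵢ` and `S vᵢ`, and skew-symmetry makes it orthogonal to its own image under `S`.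
Then `v₁, …, vₘ, S v₁, …, S vₘ` is an orthonormal basis of the eigenspace in which `S` is the
standard symplectic matrix. The two bases side by side are the columns of `O`.
-/

open Matrix

/-- The standard symplectic matrix of size `2m`, i.e. `iσ₂ ⊗ 1ₘ`, reindexed by `Fin (2*m)`. -/
noncomputable def stdSymplectic (m : ℕ) : Matrix (Fin (2 * m)) (Fin (2 * m)) ℂ :=
  Matrix.reindex ((finSumFinEquiv : Fin m ⊕ Fin m ≃ Fin (m + m)).trans (finCongr (two_mul m).symm))
    ((finSumFinEquiv : Fin m ⊕ Fin m ≃ Fin (m + m)).trans (finCongr (two_mul m).symm))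
    (Matrix.fromBlocks (0 : Matrix (Fin m) (Fin m) ℂ) (-1) 1 0)

/-- For skew-symmetric `S`, a subspace of dimension at least `2k` contains `k` orthonormal vectors
spanning an isotropic subspace for the alternating form `(x, y) ↦ x ⬝ S y`. -/
lemma exists_isotropic_family {ι : Type*} [Fintype ι] [DecidableEq ι] (S : Matrix ι ι ℝ)
    (hS : Sᵀ = -S) (W : Submodule ℝ (ι → ℝ)) (k : ℕ) (hk : 2 * k ≤ Module.finrank ℝ W) :
    ∃ v : Fin k → ι → ℝ, (∀ i, v i ∈ W) ∧
      (∀ i j, v i ⬝ᵥ v j = if i = j then 1 else 0) ∧ ∀ i j, v i ⬝ᵥ S *ᵥ v j = 0 := by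
  have skew : ∀ x y : ι → ℝ, x ⬝ᵥ S *ᵥ y = -(y ⬝ᵥ S *ᵥ x) := by
    intro x y
    rw [dotProduct_mulVec, ← mulVec_transpose, hS, neg_mulVec, neg_dotProduct, dotProduct_comm]
  induction k with
  | zero => exact ⟨fun i => i.elim0, fun i => i.elim0, fun i => i.elim0, fun i => i.elim0⟩
  | succ k ih =>
    obtain ⟨v, hvW, hv1, hv2⟩ := ih (by omega)
    -- A nonzero `u ∈ W` orthogonal to all `vᵢ` and `S vᵢ` exists, as these are `2k` linear
    -- conditions on a space of dimension at least `2k + 2`.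
    let M : Matrix (Fin k ⊕ Fin k) ι ℝ := Matrix.of (Sum.elim v (fun i => v i ᵥ* S))
    have hker : LinearMap.ker (M.mulVecLin.domRestrict W) ≠ ⊥ := by
      apply LinearMap.ker_ne_bot_of_finrank_lt
      simp only [Module.finrank_fintype_fun_eq_card, Fintype.card_sum, Fintype.card_fin]
      omega
    obtain ⟨⟨u, huW⟩, hu, hu0⟩ := Submodule.exists_mem_ne_zero_of_ne_bot hker
    have hu0' : u ≠ 0 := fun h => hu0 (by simp [h])
    have hMu : M *ᵥ u = 0 := by simpa using hu
    have hu1 : ∀ i, v i ⬝ᵥ u = 0 := fun i => congrFun hMu (Sum.inl i)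
    have hu2 : ∀ i, v i ⬝ᵥ S *ᵥ u = 0 := fun i => by
      rw [dotProduct_mulVec]; exact congrFun hMu (Sum.inr i)
    have hpos : 0 < u ⬝ᵥ u :=
      lt_of_le_of_ne (Finset.sum_nonneg fun i _ => mul_self_nonneg (u i))
        (fun h => hu0' (dotProduct_self_eq_zero.mp h.symm))
    have hself : u ⬝ᵥ S *ᵥ u = 0 := by linarith [skew u u]
    set c : ℝ := (√(u ⬝ᵥ u))⁻¹ with hc
    have hcc : c * (c * (u ⬝ᵥ u)) = 1 := by
      have h1 := Real.mul_self_sqrt hpos.le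
      have h2 := (Real.sqrt_pos.mpr hpos).ne'
      rw [← mul_assoc, hc, ← mul_inv, h1, inv_mul_cancel₀ hpos.ne']
    refine ⟨Fin.cons (c • u) v, ?_, ?_, ?_⟩
    · intro i
      refine Fin.cases ?_ (fun i => ?_) i
      · simpa using W.smul_mem c huW
      · simpa using hvW i
    · intro i j
      refine Fin.cases ?_ (fun i => ?_) i <;> refine Fin.cases ?_ (fun j => ?_) j
      · simpa using hcc
      · simp [(Fin.succ_ne_zero j).symm, dotProduct_comm u, hu1]
      · simp [hu1]
      · simp [hv1]
    · intro i j
      refine Fin.cases ?_ (fun i => ?_) i <;> refine Fin.cases ?_ (fun j => ?_) j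
      · simp [mulVec_smul, hself]
      · simp [skew u, hu2]
      · simp [mulVec_smul, hu2]
      · simp [hv2]

/-- For `c = ±1`, the `c`-eigenspace of a traceless involution `A` of size `4m` commuting with the
orthogonal complex structure `S` contains an orthonormal family of `2m` vectors, the columns of
`P`, on which `S` acts as the standard symplectic matrix. The columns are labelled through `e`. -/
lemma exists_eigenframe {ι κ : Type*} [Fintype ι] [DecidableEq ι] [DecidableEq κ] (m : ℕ)
    (hcard : Fintype.card ι = 4 * m) (e : Fin m ⊕ Fin m ≃ κ) (A S : Matrix ι ι ℝ)
    (hA2 : A * A = 1) (hAtr : A.trace = 0) (hS : Sᵀ = -S) (hS2 : S * S = -1)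
    (hAS : A * S = S * A) (c : ℝ) (hc : c * c = 1) :
    ∃ P : Matrix ι κ ℝ, Pᵀ * P = 1 ∧ A * P = c • P ∧
      Pᵀ * S * P = reindex e e (fromBlocks 0 (-1) 1 0) := by
  -- `E` is the projection onto the eigenspace, and its rank is its trace `2m`.
  set E : Matrix ι ι ℝ := (1 / 2 : ℝ) • (1 + c • A) with hE
  have hAE : A * E = c • E := by
    rw [hE, mul_smul_comm, mul_add, mul_smul_comm, hA2, mul_one, smul_comm c, smul_add c,
      smul_smul c c, hc, one_smul, add_comm]
  have hEE : E * E = E := by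
    conv_lhs => rw [hE, smul_mul_assoc, add_mul, smul_mul_assoc, hAE, smul_smul, hc, one_mul]
    module
  have hproj := LinearMap.IsIdempotentElem.isProj_range (toLin' E) (by
    rw [IsIdempotentElem, Module.End.mul_eq_comp, ← toLin'_mul, hEE])
  have hrank : 2 * m ≤ Module.finrank ℝ (LinearMap.range (toLin' E)) := by
    have htr := hproj.trace
    rw [trace_toLin'_eq, hE, trace_smul, trace_add, trace_smul, hAtr, trace_one, hcard] at htr
    push_cast at htr
    simp only [smul_eq_mul, mul_zero, add_zero] at htr
    have : (2 * m : ℝ) = Module.finrank ℝ (LinearMap.range (toLin' E)) := by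
      rw [← htr]; ring
    exact_mod_cast this.le
  obtain ⟨v, hvW, hv1, hv2⟩ := exists_isotropic_family S hS _ m hrank
  let V : Matrix ι (Fin m) ℝ := Matrix.of fun x i => v i x
  have hV1 : Vᵀ * V = 1 := by
    ext i j
    rw [one_apply, ← hv1 i j]
    rfl
  have hV2 : Vᵀ * (S * V) = 0 := by
    ext i j
    exact hv2 i j
  have hVE : E * V = V := by
    ext x i
    exact congrFun (hproj.map_id (v i) (hvW i)) x
  have hAV : A * V = c • V := by
    conv_lhs => rw [← hVE, ← Matrix.mul_assoc, hAE, smul_mul, hVE]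
  have hASV : A * (S * V) = c • (S * V) := by
    rw [← Matrix.mul_assoc, hAS, Matrix.mul_assoc, hAV, Matrix.mul_smul]
  have hSSV : S * (S * V) = -V := by
    rw [← Matrix.mul_assoc, hS2, Matrix.neg_mul, Matrix.one_mul]
  let Q : Matrix ι (Fin m ⊕ Fin m) ℝ := fromCols V (S * V)
  have hQ1 : Qᵀ * Q = 1 := by
    simp only [Q, transpose_fromCols, fromRows_mul_fromCols, transpose_mul, hS, Matrix.mul_assoc,
      Matrix.neg_mul, Matrix.mul_neg, hSSV, hV1, hV2, neg_neg, neg_zero, fromBlocks_one]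
  have hQA : A * Q = c • Q := by
    simp only [Q, mul_fromCols, hAV, hASV]
    ext x (i | i) <;> rfl
  have hQS : Qᵀ * S * Q = fromBlocks 0 (-1) 1 0 := by
    simp only [Q, Matrix.mul_assoc, mul_fromCols S, transpose_fromCols, fromRows_mul_fromCols,
      transpose_mul, hS, Matrix.neg_mul, Matrix.mul_neg, hSSV, hV1, hV2, neg_neg, neg_zero]
  refine ⟨Q.submatrix id e.symm, ?_, ?_, ?_⟩
  · change (Qᵀ * Q).submatrix e.symm e.symm = 1
    rw [hQ1, submatrix_one_equiv]
  · change (A * Q).submatrix id e.symm = _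
    rw [hQA]
    rfl
  · change (Qᵀ * S * Q).submatrix e.symm e.symm = _
    rw [hQS]
    rfl

/-- The real form of the theorem; `e` fixes the labelling of the two symplectic blocks. -/
lemma exists_real_normal_form {κ : Type*} [Fintype κ] [DecidableEq κ] (m : ℕ)
    (e : Fin m ⊕ Fin m ≃ κ) (A S : Matrix (κ ⊕ κ) (κ ⊕ κ) ℝ) (hA : Aᵀ = A)
    (hA2 : A * A = 1) (hAtr : A.trace = 0) (hS : Sᵀ = -S) (hS2 : S * S = -1)
    (hAS : A * S = S * A) :
    ∃ O : Matrix (κ ⊕ κ) (κ ⊕ κ) ℝ, Oᵀ * O = 1 ∧ Oᵀ * A * O = fromBlocks 1 0 0 (-1) ∧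
      Oᵀ * S * O = fromBlocks (reindex e e (fromBlocks 0 (-1) 1 0)) 0 0
        (reindex e e (fromBlocks 0 (-1) 1 0)) := by
  have hcard : Fintype.card (κ ⊕ κ) = 4 * m := by
    have := Fintype.card_congr e
    simp only [Fintype.card_sum, Fintype.card_fin] at this ⊢
    omega
  obtain ⟨P, hP1, hPA, hPS⟩ :=
    exists_eigenframe m hcard e A S hA2 hAtr hS hS2 hAS 1 (by norm_num)
  obtain ⟨Q, hQ1, hQA, hQS⟩ :=
    exists_eigenframe m hcard e A S hA2 hAtr hS hS2 hAS (-1) (by norm_num)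
  rw [one_smul] at hPA
  rw [neg_one_smul] at hQA
  have hPA' : Pᵀ * A = Pᵀ := by
    conv_rhs => rw [← hPA, transpose_mul, hA]
  -- Any `X` commuting with `A` maps the `-1`-eigenspace to the orthogonal complement of the
  -- `1`-eigenspace; this is used for `X = 1` and `X = S`.
  have cross : ∀ X : Matrix (κ ⊕ κ) (κ ⊕ κ) ℝ, A * X = X * A → Pᵀ * (X * Q) = 0 := by
    intro X hX
    have h : Pᵀ * (X * Q) = -(Pᵀ * (X * Q)) := by
      conv_lhs => rw [← hPA', Matrix.mul_assoc, ← Matrix.mul_assoc A, hX, Matrix.mul_assoc X, hQA,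
        Matrix.mul_neg, Matrix.mul_neg]
    ext i j
    have hij := congrFun (congrFun h i) j
    rw [Matrix.neg_apply] at hij
    rw [Matrix.zero_apply]
    linarith
  have hPQ : Pᵀ * Q = 0 := by simpa using cross 1 (by simp)
  have hPSQ : Pᵀ * (S * Q) = 0 := cross S hAS
  have hQP : Qᵀ * P = 0 := by simpa using congrArg transpose hPQ
  have hQSP : Qᵀ * (S * P) = 0 := by
    have h := congrArg transpose hPSQ
    rw [transpose_mul, transpose_mul, transpose_transpose, hS, Matrix.mul_neg, Matrix.neg_mul,
      Matrix.mul_assoc, transpose_zero, neg_eq_zero] at h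
    exact h
  rw [Matrix.mul_assoc] at hPS hQS
  refine ⟨fromCols P Q, ?_, ?_, ?_⟩
  · rw [transpose_fromCols, fromRows_mul_fromCols, hP1, hQ1, hPQ, hQP, fromBlocks_one]
  · rw [Matrix.mul_assoc, mul_fromCols, transpose_fromCols, fromRows_mul_fromCols, hPA, hQA,
      Matrix.mul_neg, Matrix.mul_neg, hP1, hQ1, hPQ, hQP, neg_zero]
  · rw [Matrix.mul_assoc, mul_fromCols, transpose_fromCols, fromRows_mul_fromCols, hPS, hQS,
      hPSQ, hQSP]

/-- two entrywise real unitary matrices `Ω`, `Σ` of size `4m` with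
`Ω² = 1`, `tr Ω = 0`, `Σ² = −1` and `ΩΣ = ΣΩ` can be simultaneously brought to the
normal forms `σ₃⊗1₂ₘ` and `1₂⊗(iσ₂⊗1ₘ)` by a real orthogonal basis change. -/
theorem real_symmetries_commuting_symplectic_normal_form
    (m : ℕ) (hm : 1 ≤ m)
    (Om Sg : Matrix (Fin (2 * m) ⊕ Fin (2 * m)) (Fin (2 * m) ⊕ Fin (2 * m)) ℂ)
    (hOm_real : Om.map (starRingEnd ℂ) = Om)
    (hOm_unit : Om.conjTranspose * Om = 1 ∧ Om * Om.conjTranspose = 1)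
    (hOm2 : Om * Om = 1) (hOm_tr : Om.trace = 0)
    (hSg_real : Sg.map (starRingEnd ℂ) = Sg)
    (hSg_unit : Sg.conjTranspose * Sg = 1 ∧ Sg * Sg.conjTranspose = 1)
    (hSg2 : Sg * Sg = -1)
    (hcomm : Om * Sg = Sg * Om) :
    ∃ O : Matrix (Fin (2 * m) ⊕ Fin (2 * m)) (Fin (2 * m) ⊕ Fin (2 * m)) ℂ,
      O.map (starRingEnd ℂ) = O ∧ O.transpose * O = 1 ∧
      O.transpose * Om * O = Matrix.fromBlocks 1 0 0 (-1) ∧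
      O.transpose * Sg * O = Matrix.fromBlocks (stdSymplectic m) 0 0 (stdSymplectic m) := by
  -- Real forms of `Om` and `Sg`, and their symmetry: for a real unitary, the transpose is the
  -- inverse, which is `Om` and `-Sg` respectively.
  let f : ℝ →+* ℂ := Complex.ofRealHom
  have descend : ∀ X : Matrix (Fin (2 * m) ⊕ Fin (2 * m)) (Fin (2 * m) ⊕ Fin (2 * m)) ℂ,
      X.map (starRingEnd ℂ) = X →
        ∃ Y : Matrix (Fin (2 * m) ⊕ Fin (2 * m)) (Fin (2 * m) ⊕ Fin (2 * m)) ℝ, Y.map f = X := by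
    intro X hX
    refine ⟨X.map Complex.re, ?_⟩
    ext i j
    exact Complex.conj_eq_iff_re.mp (congrFun (congrFun hX i) j)
  have inj : ∀ {X Y : Matrix (Fin (2 * m) ⊕ Fin (2 * m)) (Fin (2 * m) ⊕ Fin (2 * m)) ℝ},
      X.map f = Y.map f → X = Y := fun h => map_injective Complex.ofReal_injective h
  have hct : ∀ Y : Matrix (Fin (2 * m) ⊕ Fin (2 * m)) (Fin (2 * m) ⊕ Fin (2 * m)) ℝ,
      (Y.map f)ᴴ = Yᵀ.map f := by
    intro Y
    ext i j
    exact Complex.conj_ofReal _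
  have map_one' : (1 : Matrix (Fin (2 * m) ⊕ Fin (2 * m)) (Fin (2 * m) ⊕ Fin (2 * m)) ℝ).map f = 1 :=
    Matrix.map_one f f.map_zero f.map_one
  have map_neg' : ∀ Y : Matrix (Fin (2 * m) ⊕ Fin (2 * m)) (Fin (2 * m) ⊕ Fin (2 * m)) ℝ,
      (-Y).map f = -Y.map f := fun Y => Matrix.map_neg f f.map_neg Y
  obtain ⟨A, rfl⟩ := descend Om hOm_real
  obtain ⟨S, rfl⟩ := descend Sg hSg_real
  have hA2 : A * A = 1 := inj (by rw [Matrix.map_mul, hOm2, map_one'])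
  have hS2 : S * S = -1 := inj (by rw [Matrix.map_mul, hSg2, map_neg', map_one'])
  have hAS : A * S = S * A := inj (by rw [Matrix.map_mul, Matrix.map_mul, hcomm])
  have hAA : Aᵀ * A = 1 := inj (by rw [Matrix.map_mul, ← hct, hOm_unit.1, map_one'])
  have hSS : Sᵀ * S = 1 := inj (by rw [Matrix.map_mul, ← hct, hSg_unit.1, map_one'])
  have hA : Aᵀ = A := by
    calc Aᵀ = Aᵀ * (A * A) := by rw [hA2, Matrix.mul_one]
      _ = A := by rw [← Matrix.mul_assoc, hAA, Matrix.one_mul]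
  have hS : Sᵀ = -S := by
    calc Sᵀ = -(Sᵀ * (S * S)) := by rw [hS2, Matrix.mul_neg, Matrix.mul_one, neg_neg]
      _ = -S := by rw [← Matrix.mul_assoc, hSS, Matrix.one_mul]
  have hAtr : A.trace = 0 := by
    apply Complex.ofReal_injective
    rw [Complex.ofReal_zero, ← hOm_tr]
    exact AddMonoidHom.map_trace f.toAddMonoidHom A
  let e : Fin m ⊕ Fin m ≃ Fin (2 * m) := finSumFinEquiv.trans (finCongr (two_mul m).symm)
  obtain ⟨O, hO1, hOA, hOS⟩ := exists_real_normal_form m e A S hA hA2 hAtr hS hS2 hAS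
  have hJ : (reindex e e (fromBlocks 0 (-1) 1 0 : Matrix (Fin m ⊕ Fin m) (Fin m ⊕ Fin m) ℝ)).map f
      = stdSymplectic m := by
    change ((fromBlocks 0 (-1) 1 0 : Matrix (Fin m ⊕ Fin m) (Fin m ⊕ Fin m) ℝ).map f).submatrix
      e.symm e.symm = (fromBlocks 0 (-1) 1 0 : Matrix (Fin m ⊕ Fin m) (Fin m ⊕ Fin m) ℂ).submatrix
      e.symm e.symm
    rw [fromBlocks_map, Matrix.map_zero f f.map_zero, Matrix.map_neg f f.map_neg,
      Matrix.map_one f f.map_zero f.map_one]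
  refine ⟨O.map f, ?_, ?_, ?_, ?_⟩
  · ext i j
    exact Complex.conj_ofReal _
  · rw [← transpose_map, ← Matrix.map_mul, hO1, map_one']
  · rw [← transpose_map, ← Matrix.map_mul, ← Matrix.map_mul, hOA, fromBlocks_map,
      Matrix.map_zero f f.map_zero, Matrix.map_neg f f.map_neg,
      Matrix.map_one f f.map_zero f.map_one]
  · rw [← transpose_map, ← Matrix.map_mul, ← Matrix.map_mul, hOS, fromBlocks_map, hJ,
      Matrix.map_zero f f.map_zero]
end
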